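/- Let d ≥ 1, let η > 0, and let O be a nonempty open subset of the open unit ball B(0,1) ⊂ ℝ^d. Then there exists μ ∈ (0,1) such that for every M > 0 and every function F : ℝ^d → ℂ which is infinitely differentiable on the open ball B(0,2) and satisfies the derivative bounds ‖D^k F(x)‖ ≤ M · k! / η^k for every k ∈ ℕ and every x ∈ B(0,2) (where ‖D^k F(x)‖ is the operator norm of the k-th Fréchet derivative), one has |F(x)| ≤ (2M)^{1−μ} · ( sup_{z ∈ O} |F(z)| )^{μ} for every x ∈ B(0,1). -/

import Mathlib

open Metric

/-- Derivatives of the restriction of `F` to a line. -/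
lemma stab_line_deriv {E : Type*} [NormedAddCommGroup E] [NormedSpace ℝ E] {U : Set E}
    (hU : IsOpen U) {F : E → ℂ} (hF : ContDiffOn ℝ (⊤ : ℕ∞) F U) (p u : E)
    (t : ℝ) (ht : p + t • u ∈ U) (k : ℕ) :
    ContDiffAt ℝ (⊤ : ℕ∞) (fun s : ℝ => F (p + s • u)) t ∧
    iteratedDeriv k (fun s : ℝ => F (p + s • u)) t =
      iteratedFDerivWithin ℝ k F U (p + t • u) (fun _ => u) := by
  have hFt : ContDiffAt ℝ (⊤ : ℕ∞) F (p + t • u) := hF.contDiffAt (hU.mem_nhds ht)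
  have hsm : ContDiff ℝ (⊤ : ℕ∞) (fun s : ℝ => p + s • u) := by fun_prop
  refine ⟨ContDiffAt.comp (𝕜 := ℝ) t (g := F) (f := fun s : ℝ => p + s • u) hFt hsm.contDiffAt, ?_⟩
  set L : ℝ →L[ℝ] E := ContinuousLinearMap.toSpanSingleton ℝ u with hL
  set V : Set E := (fun z => p + z) ⁻¹' U with hV
  have hVo : IsOpen V := hU.preimage (by fun_prop)
  have hG : ContDiffOn ℝ (⊤ : ℕ∞) (fun z => F (p + z)) V :=
    hF.comp (f := fun z => p + z) (by fun_prop) (fun z hz => hz)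
  have hLV : IsOpen (L ⁻¹' V) := hVo.preimage L.continuous
  have hLt : L t ∈ V := by simpa [hL, hV] using ht
  have h1 := L.iteratedFDerivWithin_comp_right hG hVo.uniqueDiffOn hLV.uniqueDiffOn hLt
    (i := k) (by exact_mod_cast le_top)
  rw [iteratedFDerivWithin_of_isOpen k hLV hLt, iteratedFDerivWithin_of_isOpen k hVo hLt,
    iteratedFDeriv_comp_add_left] at h1
  rw [iteratedFDerivWithin_of_isOpen k hU ht, iteratedDeriv_eq_iteratedFDeriv]
  have h2 : (fun s : ℝ => F (p + s • u)) = (fun z => F (p + z)) ∘ L := by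
    ext s; simp [hL]
  rw [h2, h1]
  simp [hL]

lemma stab_taylor {E : Type*} [NormedAddCommGroup E] [NormedSpace ℝ E] {U : Set E}
    (hU : IsOpen U) (hc : Convex ℝ U) {F : E → ℂ} (hF : ContDiffOn ℝ (⊤ : ℕ∞) F U)
    {M η : ℝ} (hM : 0 < M) (hη : 0 < η)
    (hb : ∀ (k : ℕ) (x : E), x ∈ U →
          ‖iteratedFDerivWithin ℝ k F U x‖ ≤ M * (Nat.factorial k) / η ^ k)
    (p u : E) (hp : p ∈ U) (hpu : p + u ∈ U) (hu : ‖u‖ < η) :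
    Filter.Tendsto (fun n => ∑ k ∈ Finset.range (n + 1),
      ((k.factorial : ℝ)⁻¹) • iteratedFDerivWithin ℝ k F U p (fun _ => u))
      Filter.atTop (nhds (F (p + u))) := by
  have hmem : ∀ t ∈ Set.Icc (0:ℝ) 1, p + t • u ∈ U := by
    intro t ht
    have := hc.add_smul_sub_mem hp hpu ht
    simpa using this
  set g : ℝ → ℂ := fun s : ℝ => F (p + s • u) with hg
  have hder : ∀ k : ℕ, ∀ t ∈ Set.Icc (0:ℝ) 1, iteratedDerivWithin k g (Set.Icc 0 1) t =
      iteratedFDerivWithin ℝ k F U (p + t • u) (fun _ => u) := by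
    intro k t ht
    obtain ⟨h1, h2⟩ := stab_line_deriv hU hF p u t (hmem t ht) k
    rw [iteratedDerivWithin_eq_iteratedDeriv (uniqueDiffOn_Icc zero_lt_one)
      (h1.of_le (by exact_mod_cast le_top)) ht, h2]
  have hgc : ∀ n : ℕ, ContDiffOn ℝ (n + 1) g (Set.Icc 0 1) := by
    intro n t ht
    exact ((stab_line_deriv hU hF p u t (hmem t ht) 0).1.of_le
      (by exact_mod_cast le_top)).contDiffWithinAt
  have hdb : ∀ k : ℕ, ∀ t ∈ Set.Icc (0:ℝ) 1, ‖iteratedDerivWithin k g (Set.Icc 0 1) t‖ ≤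
      M * k.factorial * (‖u‖ / η) ^ k := by
    intro k t ht
    rw [hder k t ht]
    calc _ ≤ ‖iteratedFDerivWithin ℝ k F U (p + t • u)‖ * ‖u‖ ^ k := by
            simpa using (iteratedFDerivWithin ℝ k F U (p + t • u)).le_opNorm (fun _ => u)
      _ ≤ (M * (Nat.factorial k) / η ^ k) * ‖u‖ ^ k := by
            gcongr; exact hb k _ (hmem t ht)
      _ = _ := by rw [div_pow]; ring
  have hrem : ∀ n : ℕ, ‖F (p + u) - ∑ k ∈ Finset.range (n + 1),
      ((k.factorial : ℝ)⁻¹) • iteratedFDerivWithin ℝ k F U p (fun _ => u)‖ ≤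
      M * (((n + 1 : ℕ) : ℝ) * (‖u‖ / η) ^ (n + 1)) := by
    intro n
    have h := taylor_mean_remainder_bound (zero_le_one) (hgc n)
      (Set.right_mem_Icc.2 (zero_le_one' ℝ)) (hdb (n + 1))
    rw [taylor_within_apply] at h
    have e1 : g 1 = F (p + u) := by simp [hg]
    have e2 : ∀ k, iteratedDerivWithin k g (Set.Icc 0 1) 0 =
        iteratedFDerivWithin ℝ k F U p (fun _ => u) := by
      intro k
      rw [hder k 0 (by simp)]; simp
    simp only [e1, e2, sub_zero, one_pow, mul_one] at h
    refine h.trans (le_of_eq ?_)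
    have : (n.factorial : ℝ) ≠ 0 := by positivity
    rw [Nat.factorial_succ]
    push_cast
    field_simp
  rw [← tendsto_sub_nhds_zero_iff]
  have hlim : Filter.Tendsto (fun n : ℕ => M * (((n + 1 : ℕ) : ℝ) * (‖u‖ / η) ^ (n + 1)))
      Filter.atTop (nhds 0) := by
    have h0 := tendsto_self_mul_const_pow_of_lt_one (r := ‖u‖ / η) (by positivity)
      ((div_lt_one hη).2 hu)
    have h1 := (h0.comp (Filter.tendsto_add_atTop_nat 1)).const_mul M
    simpa using h1
  refine squeeze_zero_norm (fun n => ?_) hlim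
  rw [norm_sub_rev]
  exact hrem n

lemma stab_three_lines {c : ℕ → ℂ} {M S : ℝ} (hM : 0 < M)
    (hc : ∀ k, ‖c k‖ ≤ M * (1 / 7) ^ k)
    (hS : ∀ t : ℝ, |t| ≤ 1 / 2 → ‖∑' k, c k * (t : ℂ) ^ k‖ ≤ S) :
    ‖∑' k, c k‖ ≤ S ^ (1 / 2 : ℝ) * (2 * M) ^ (1 / 2 : ℝ) := by
  set G : ℂ → ℂ := fun z => ∑' k, c k * z ^ k with hG
  have hterm : ∀ (R : ℝ) (z : ℂ) (k : ℕ), ‖z‖ ≤ R → ‖c k * z ^ k‖ ≤ M * (R / 7) ^ k := by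
    intro R z k hz
    rw [norm_mul, norm_pow]
    calc _ ≤ (M * (1 / 7) ^ k) * R ^ k := by gcongr; exact hc k
      _ = _ := by rw [div_pow, div_pow]; ring
  have hGd : DifferentiableOn ℂ G (ball 0 4) := by
    refine Complex.differentiableOn_tsum_of_summable_norm (u := fun k => M * (4 / 7) ^ k)
      ((summable_geometric_of_lt_one (by norm_num) (by norm_num)).mul_left M)
      (fun k => by fun_prop) isOpen_ball (fun k z hz => ?_)
    exact hterm 4 z k (mem_ball_zero_iff.1 hz).le
  have hGb : ∀ z : ℂ, ‖z‖ ≤ 7 / 2 → ‖G z‖ ≤ 2 * M := by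
    intro z hz
    have h1 : HasSum (fun k : ℕ => M * (1 / 2 : ℝ) ^ k) (M * 2) := hasSum_geometric_two.mul_left M
    rw [mul_comm 2 M]
    refine tsum_of_norm_bounded h1 (fun k => ?_)
    have := hterm (7 / 2) z k hz
    norm_num at this ⊢
    exact this
  obtain ⟨x, hx0, hx⟩ : ∃ x : ℝ, 0 < x ∧ Real.cosh x = 2 :=
    ⟨Real.arcosh 2, Real.arcosh_pos (by norm_num), Real.cosh_arcosh (by norm_num)⟩
  have h2x : Real.cosh (2 * x) = 7 := by
    rw [Real.cosh_two_mul, Real.sinh_sq, hx]; norm_num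
  have hcosh : ∀ w : ℂ, w ∈ Complex.HadamardThreeLines.verticalClosedStrip 0 (2 * x) →
      ‖Complex.cosh w / 2‖ ≤ 7 / 2 := by
    intro w hw
    have hw' : 0 ≤ w.re ∧ w.re ≤ 2 * x := hw
    have h1 : ‖Complex.cosh w‖ ≤ Real.cosh w.re := by
      rw [Complex.cosh, Real.cosh_eq, norm_div]
      have := norm_add_le (Complex.exp w) (Complex.exp (-w))
      simp only [Complex.norm_exp, Complex.neg_re] at this
      simp only [Complex.norm_ofNat]
      gcongr
    have h2 : Real.cosh w.re ≤ Real.cosh (2 * x) := by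
      rw [Real.cosh_le_cosh, abs_of_nonneg hw'.1, abs_of_nonneg (by linarith)]
      exact hw'.2
    rw [norm_div, Complex.norm_ofNat]
    rw [h2x] at h2
    linarith
  set f : ℂ → ℂ := fun w => G (Complex.cosh w / 2) with hf
  have hul : (0:ℝ) < 2 * x := by linarith
  have hxm : (x : ℂ) ∈ Complex.HadamardThreeLines.verticalClosedStrip 0 (2 * x) := by
    constructor <;> simp <;> linarith
  have hfd : DiffContOnCl ℂ f (Complex.HadamardThreeLines.verticalStrip 0 (2 * x)) := by
    apply DifferentiableOn.diffContOnCl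
    rw [Complex.HadamardThreeLines.verticalStrip, Complex.closure_preimage_re,
      closure_Ioo hul.ne]
    refine hGd.comp (t := ball 0 4) (f := fun w => Complex.cosh w / 2) ?_ ?_
    · exact (Complex.differentiable_cosh.div_const 2).differentiableOn
    · intro w hw
      have := hcosh w hw
      rw [mem_ball_zero_iff]
      linarith
  have key := Complex.HadamardThreeLines.norm_le_interp_of_mem_verticalClosedStrip'
    (f := f) (z := (x : ℂ)) (a := S) (b := 2 * M) hul hxm hfd ?_ ?_ ?_
  · have e1 : f x = ∑' k, c k := by
      simp only [hf, hG]
      rw [← Complex.ofReal_cosh, hx]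
      simp
    have e2 : ((x : ℂ).re - 0) / (2 * x - 0) = 1 / 2 := by
      simp; field_simp
    rw [e1, e2] at key
    norm_num at key ⊢
    exact key
  · refine ⟨2 * M, ?_⟩
    rintro _ ⟨w, hw, rfl⟩
    exact hGb _ (hcosh w hw)
  · intro w hw
    have hw' : w.re = 0 := hw
    have e : Complex.cosh w / 2 = ((Real.cos w.im / 2 : ℝ) : ℂ) := by
      have : w = w.im * Complex.I := by
        apply Complex.ext <;> simp [hw']
      rw [this, Complex.cosh_mul_I]; simp
    simp only [hf]
    rw [e]
    apply hS
    rw [abs_div, abs_two]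
    have := Real.abs_cos_le_one w.im
    linarith
  · intro w hw
    have hw' : w.re = 2 * x := hw
    exact hGb _ (hcosh w ⟨by rw [hw']; exact hul.le, hw'.le⟩)

lemma stab_step {E : Type*} [NormedAddCommGroup E] [NormedSpace ℝ E]
    {F : E → ℂ} (hF : ContDiffOn ℝ (⊤ : ℕ∞) F (ball 0 2))
    {M η : ℝ} (hM : 0 < M) (hη : 0 < η)
    (hb : ∀ (k : ℕ) (x : E), x ∈ ball (0:E) 2 →
          ‖iteratedFDerivWithin ℝ k F (ball 0 2) x‖ ≤ M * (Nat.factorial k) / η ^ k)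
    {r S : ℝ} (hr1 : r ≤ 1 / 2) (hr2 : r ≤ η / 14)
    (p : E) (hp : p ∈ ball (0:E) 1) (hS : ∀ y ∈ ball p r, ‖F y‖ ≤ S)
    (y : E) (hy : y ∈ ball p (2 * r)) :
    ‖F y‖ ≤ S ^ (1 / 2 : ℝ) * (2 * M) ^ (1 / 2 : ℝ) := by
  set u := y - p with hu
  have hun : ‖u‖ < 2 * r := by simpa [dist_eq_norm] using hy
  have hp1 : ‖p‖ < 1 := by simpa using hp
  have hp2 : p ∈ ball (0:E) 2 := by rw [mem_ball_zero_iff]; linarith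
  set c : ℕ → ℂ := fun k =>
    ((k.factorial : ℝ)⁻¹) • iteratedFDerivWithin ℝ k F (ball 0 2) p (fun _ => u) with hcdef
  have hc : ∀ k, ‖c k‖ ≤ M * (1 / 7) ^ k := by
    intro k
    have hk : (0:ℝ) < k.factorial := by positivity
    simp only [hcdef]
    rw [norm_smul, norm_inv, Real.norm_of_nonneg hk.le]
    calc _ ≤ (k.factorial : ℝ)⁻¹ * ((M * (Nat.factorial k) / η ^ k) * ‖u‖ ^ k) := by
          gcongr
          refine le_trans ?_ (mul_le_mul_of_nonneg_right (hb k p hp2) (by positivity))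
          simpa using (iteratedFDerivWithin ℝ k F (ball 0 2) p).le_opNorm (fun _ => u)
      _ = M * (‖u‖ / η) ^ k := by rw [div_pow]; field_simp
      _ ≤ _ := by
          have h7 : ‖u‖ / η ≤ 1 / 7 := by
            rw [div_le_iff₀ hη]; linarith
          gcongr M * ?_ ^ k
  have hval : ∀ t : ℝ, |t| ≤ 1 → ∑' k, c k * (t : ℂ) ^ k = F (p + t • u) := by
    intro t ht
    have htu : ‖t • u‖ ≤ ‖u‖ := by
      rw [norm_smul, Real.norm_eq_abs]
      exact mul_le_of_le_one_left (norm_nonneg _) ht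
    have hT := stab_taylor isOpen_ball (convex_ball (0:E) 2) hF hM hη hb p (t • u) hp2
      (by rw [mem_ball_zero_iff]; linarith [norm_add_le p (t • u)]) (by linarith)
    have hsum : Summable (fun k => c k * (t : ℂ) ^ k) := by
      refine Summable.of_norm_bounded (g := fun k => M * (1 / 7 : ℝ) ^ k)
        ((summable_geometric_of_lt_one (by norm_num) (by norm_num)).mul_left M) (fun k => ?_)
      rw [norm_mul, norm_pow, Complex.norm_real, Real.norm_eq_abs]
      calc _ ≤ ‖c k‖ * 1 := by gcongr; exact pow_le_one₀ (abs_nonneg _) ht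
        _ ≤ _ := by rw [mul_one]; exact hc k
    have h2 := (hsum.hasSum.tendsto_sum_nat).comp (Filter.tendsto_add_atTop_nat 1)
    refine tendsto_nhds_unique h2 (hT.congr (fun n => ?_))
    refine Finset.sum_congr rfl (fun k _ => ?_)
    have := (iteratedFDerivWithin ℝ k F (ball 0 2) p).map_smul_univ (fun _ => t) (fun _ => u)
    simp only [hcdef]
    rw [this]
    simp
    ring
  have h := stab_three_lines (c := c) (S := S) hM hc (fun t ht => by
    rw [hval t (by linarith)]
    apply hS
    rw [mem_ball_iff_norm, add_sub_cancel_left, norm_smul, Real.norm_eq_abs]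
    nlinarith [norm_nonneg u])
  have h1 := hval 1 (by simp)
  simp [hu] at h1
  rwa [h1] at h

theorem analytic_conditional_stability
    (d : ℕ) (hd : 1 ≤ d) (η : ℝ) (hη : 0 < η)
    (O : Set (EuclideanSpace ℝ (Fin d))) (hO : O.Nonempty) (hOopen : IsOpen O)
    (hOsub : O ⊆ ball (0 : EuclideanSpace ℝ (Fin d)) 1) :
    ∃ μ ∈ Set.Ioo (0 : ℝ) 1,
      ∀ (M : ℝ), 0 < M →
      ∀ F : EuclideanSpace ℝ (Fin d) → ℂ,
        ContDiffOn ℝ (⊤ : ℕ∞) F (ball (0 : EuclideanSpace ℝ (Fin d)) 2) →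
        (∀ (k : ℕ) (x : EuclideanSpace ℝ (Fin d)), x ∈ ball (0 : EuclideanSpace ℝ (Fin d)) 2 →
          ‖iteratedFDerivWithin ℝ k F (ball (0 : EuclideanSpace ℝ (Fin d)) 2) x‖ ≤
            M * (Nat.factorial k) / η ^ k) →
        ∀ x ∈ ball (0 : EuclideanSpace ℝ (Fin d)) 1,
          ‖F x‖ ≤ (2 * M) ^ (1 - μ) * (⨆ z ∈ O, ‖F z‖) ^ μ := by
  obtain ⟨z₀, hz₀⟩ := hO
  obtain ⟨r₀, hr₀, hball⟩ := Metric.isOpen_iff.1 hOopen z₀ hz₀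
  obtain ⟨r, hr, hrr, hr1, hr2⟩ : ∃ r > 0, r ≤ r₀ ∧ r ≤ 1 / 2 ∧ r ≤ η / 14 :=
    ⟨min r₀ (min (1 / 2) (η / 14)), by positivity, min_le_left _ _,
      (min_le_right _ _).trans (min_le_left _ _), (min_le_right _ _).trans (min_le_right _ _)⟩
  obtain ⟨N, hN⟩ := exists_nat_gt (2 / r)
  have hN0 : (0:ℝ) < N := lt_trans (by positivity) hN
  have hNne : N ≠ 0 := by rintro rfl; simp at hN0
  refine ⟨(1 / 2 : ℝ) ^ N, ⟨by positivity, pow_lt_one₀ (by norm_num) (by norm_num) hNne⟩, ?_⟩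
  intro M hM F hF hb x hx
  set s := ⨆ z ∈ O, ‖F z‖ with hs
  have hFM : ∀ z ∈ O, ‖F z‖ ≤ M := by
    intro z hz
    have := hb 0 z (ball_subset_ball (by norm_num) (hOsub hz))
    simpa using this
  have hin : ∀ z, (⨆ (_ : z ∈ O), ‖F z‖) ≤ M := fun z =>
    Real.iSup_le (fun hz => hFM z hz) hM.le
  have hle : ∀ z ∈ O, ‖F z‖ ≤ s := by
    intro z hz
    have h1 : (⨆ (_ : z ∈ O), ‖F z‖) ≤ s :=
      le_ciSup (f := fun z => ⨆ (_ : z ∈ O), ‖F z‖) ⟨M, by rintro _ ⟨w, rfl⟩; exact hin w⟩ z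
    simpa [hz] using h1
  have hs0 : 0 ≤ s := (norm_nonneg _).trans (hle z₀ hz₀)
  have hz1 : z₀ ∈ ball (0 : EuclideanSpace ℝ (Fin d)) 1 := hOsub hz₀
  have hxz : ‖x - z₀‖ ≤ 2 := by
    have h1 : ‖x‖ < 1 := by simpa using hx
    have h2 : ‖z₀‖ < 1 := by simpa using hz1
    linarith [norm_sub_le x z₀]
  have main : ∀ j : ℕ, j ≤ N → ∀ y ∈ ball (z₀ + ((j : ℝ) / N) • (x - z₀)) r,
      ‖F y‖ ≤ (2 * M) ^ (1 - (1 / 2 : ℝ) ^ j) * s ^ ((1 / 2 : ℝ) ^ j) := by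
    intro j
    induction j with
    | zero =>
      intro _ y hy
      have : y ∈ ball z₀ r := by simpa using hy
      simpa using hle y (hball (ball_subset_ball hrr this))
    | succ j ih =>
      intro hj y hy
      have hjm : z₀ + ((j : ℝ) / N) • (x - z₀) ∈ ball (0 : EuclideanSpace ℝ (Fin d)) 1 := by
        refine (convex_ball _ _).add_smul_sub_mem hz1 hx ⟨by positivity, ?_⟩
        rw [div_le_one hN0]
        exact_mod_cast (Nat.le_of_succ_le hj)
      have hst := stab_step hF hM hη hb hr1 hr2 _ hjm (ih (Nat.le_of_succ_le hj)) y ?_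
      · refine hst.trans (le_of_eq ?_)
        rw [Real.mul_rpow (by positivity) (by positivity), ← Real.rpow_mul (by positivity),
          ← Real.rpow_mul hs0, mul_right_comm, ← Real.rpow_add (by positivity)]
        congr 2 <;> ring
      · have hd1 : dist (z₀ + (((j + 1 : ℕ) : ℝ) / N) • (x - z₀)) (z₀ + ((j : ℝ) / N) • (x - z₀))
            ≤ r := by
          rw [dist_add_left, dist_eq_norm, ← sub_smul, norm_smul]
          have : (((j + 1 : ℕ) : ℝ) / N) - (j : ℝ) / N = 1 / N := by push_cast; ring
          rw [this, Real.norm_of_nonneg (by positivity), one_div_mul_eq_div, div_le_iff₀ hN0]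
          rw [div_lt_iff₀ hr] at hN
          linarith
        rw [mem_ball] at hy ⊢
        linarith [dist_triangle y (z₀ + (((j + 1 : ℕ) : ℝ) / N) • (x - z₀))
          (z₀ + ((j : ℝ) / N) • (x - z₀))]
  apply main N le_rfl
  rw [div_self hN0.ne']
  simpa using hr
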